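/- Let (R, m) be a complete regular local domain, let I ⊆ R be an ideal, let M ≥ 1, h ≥ 1, n ≥ 1 be integers, let s_1, …, s_n be non-negative integers, and let u ∈ I^{(M)}. Let v be an element of an algebraic closure of Frac(R) with v^M = u, let R' be the integral closure of R[v] in Frac(R)(v), and let B be a big Cohen–Macaulay algebra over R'. Suppose that for every associated prime p of R/I there exists c_p ∈ R − p such that c_p·v^{s_i+h} ∈ I^{s_i+1}B for every i = 1, …, n. Then for every i = 1, …, n one has v^{s_i+h} ∈ I^{(s_i+1)}B. -/

import Mathlib

set_option synthInstance.maxHeartbeats 1000000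
set_option maxHeartbeats 2000000

open Ideal IsLocalRing

/-- The multiplicative set `W = R − ⋃_{p ∈ Ass_R(R/I)} p`. -/
def assPrimesCompl {R : Type*} [CommRing R] (I : Ideal R) : Submonoid R where
  carrier := {x : R | ∀ p ∈ associatedPrimes R (R ⧸ I), x ∉ p}
  mul_mem' := by
    intro a b ha hb p hp hab
    rcases hp.isPrime.mem_or_mem hab with h | h
    · exact ha p hp h
    · exact hb p hp h
  one_mem' := fun p hp h => hp.isPrime.ne_top ((Ideal.eq_top_iff_one _).mpr h)

/-- The `n`-th symbolic power `I⁽ⁿ⁾ = IⁿR_W ∩ R`. -/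
noncomputable def symbolicPower {R : Type*} [CommRing R] (I : Ideal R) (n : ℕ) : Ideal R :=
  (Ideal.map (algebraMap R (Localization (assPrimesCompl I))) (I ^ n)).comap
    (algebraMap R (Localization (assPrimesCompl I)))

/-- A regular local ring: a Noetherian local ring whose maximal ideal can be generated by
`dim R` elements. -/
def IsRegularLocal (A : Type*) [CommRing A] : Prop :=
  IsNoetherianRing A ∧ ∃ h : IsLocalRing A,
    letI := h
    ∃ s : Finset A, Ideal.span (s : Set A) = IsLocalRing.maximalIdeal A ∧
      (s.card : WithBot ℕ∞) = ringKrullDim A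

/-- `B` is a (balanced) big Cohen–Macaulay algebra over the Noetherian local ring `S`:
every system of parameters of `S` is a regular sequence on `B`. -/
noncomputable def IsBigCohenMacaulay (S : Type*) [CommRing S] (hS : IsLocalRing S)
    (B : Type*) [CommRing B] [Algebra S B] : Prop :=
  letI := hS
  ∀ xs : List S, (xs.length : WithBot ℕ∞) = ringKrullDim S →
    (∀ x ∈ xs, x ∈ maximalIdeal S) →
    (Ideal.span {x : S | x ∈ xs}).radical = maximalIdeal S →
    RingTheory.Sequence.IsRegular B (xs.map (algebraMap S B))

/-! The heart of the matter is that `B` is flat over the regular ring `R`. Every regular sequence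
of `R` extends to a system of parameters of `R`, hence of the integral extension `S`, so it is
weakly regular on `B`. Flatness amounts to `Ext (R ⧸ J) B⋆ 1 = 0` for all ideals `J`, where `B⋆`
is the character module. As `R` has finite global dimension, `Ext N B⋆ i` vanishes for large `i`
and finite `N`, and one descends on `i`: by prime filtrations it suffices to take `N = R ⧸ p`,
and since `R` is Cohen–Macaulay, `R ⧸ p` embeds into some `R ⧸ (ys)` with `ys` a regular sequence
of `R`. The latter has no higher `Ext` into `B⋆` because `ys` is weakly regular on `B`, and the
cokernel of the embedding is covered by the previous degree.

Given flatness, prime avoidance provides one `c` outside all associated primes of `I` with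
`c • b ∈ I ^ k B`. Such a `c` is a nonzerodivisor on `R ⧸ symbolicPower I k`, hence by flatness
on `B ⧸ (symbolicPower I k) B`, and `b` lies in `(symbolicPower I k) B`. -/

open CategoryTheory Abelian Module RingTheory.Sequence TensorProduct

universe u v w

section Ext

variable {C : Type u} [Category.{v} C] [Abelian C] [HasExt.{w} C] {S : ShortComplex C}

lemma subsingleton_ext_of_iso {X Y E : C} (e : X ≅ Y) {i : ℕ} (hX : Subsingleton (Ext X E i)) :
    Subsingleton (Ext Y E i) :=
  subsingleton_of_forall_eq 0 fun y ↦ by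
    rw [← Ext.mk₀_id_comp y, ← e.inv_hom_id, ← Ext.mk₀_comp_mk₀_assoc,
      hX.elim ((Ext.mk₀ e.hom).comp y _) 0, Ext.comp_zero]

lemma subsingleton_ext_X₁_of_shortExact (hS : S.ShortExact) {E : C} {i : ℕ}
    (h₂ : Subsingleton (Ext S.X₂ E i)) (h₃ : Subsingleton (Ext S.X₃ E (i + 1))) :
    Subsingleton (Ext S.X₁ E i) :=
  subsingleton_of_forall_eq 0 fun x ↦ by
    obtain ⟨y, rfl⟩ := Ext.contravariant_sequence_exact₁ hS _ x (add_comm 1 i) (h₃.elim _ _)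
    rw [h₂.elim y 0, Ext.comp_zero]

lemma subsingleton_ext_X₂_of_shortExact (hS : S.ShortExact) {E : C} {i : ℕ}
    (h₁ : Subsingleton (Ext S.X₁ E i)) (h₃ : Subsingleton (Ext S.X₃ E i)) :
    Subsingleton (Ext S.X₂ E i) :=
  subsingleton_of_forall_eq 0 fun x ↦ by
    obtain ⟨y, rfl⟩ := Ext.contravariant_sequence_exact₂ hS _ x (h₁.elim _ _)
    rw [h₃.elim y 0, Ext.comp_zero]

lemma subsingleton_ext_X₃_of_shortExact (hS : S.ShortExact) {E : C} {i : ℕ}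
    (h₁ : Subsingleton (Ext S.X₁ E i)) (h₂ : Subsingleton (Ext S.X₂ E (i + 1))) :
    Subsingleton (Ext S.X₃ E (i + 1)) :=
  subsingleton_of_forall_eq 0 fun x ↦ by
    obtain ⟨y, rfl⟩ := Ext.contravariant_sequence_exact₃ hS _ x (h₂.elim _ _) (add_comm 1 i)
    rw [h₁.elim y 0, Ext.comp_zero]

lemma subsingleton_ext_one_X₃_of_shortExact (hS : S.ShortExact) {E : C}
    (hf : ∀ φ : S.X₁ ⟶ E, ∃ ψ : S.X₂ ⟶ E, S.f ≫ ψ = φ) (h₂ : Subsingleton (Ext S.X₂ E 1)) :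
    Subsingleton (Ext S.X₃ E 1) :=
  subsingleton_of_forall_eq 0 fun x ↦ by
    obtain ⟨y, rfl⟩ := Ext.contravariant_sequence_exact₃ hS _ x (h₂.elim _ _) (add_comm 1 0)
    obtain ⟨φ, rfl⟩ := (Ext.mk₀_bijective _ _).2 y
    obtain ⟨ψ, rfl⟩ := hf φ
    rw [← Ext.mk₀_comp_mk₀]
    exact hS.extClass_comp_assoc _

lemma exists_comp_eq_of_subsingleton_ext_one (hS : S.ShortExact) {E : C}
    (h₃ : Subsingleton (Ext S.X₃ E 1)) (φ : S.X₁ ⟶ E) : ∃ ψ : S.X₂ ⟶ E, S.f ≫ ψ = φ := by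
  obtain ⟨y, hy⟩ := Ext.contravariant_sequence_exact₁ hS _ (Ext.mk₀ φ) (add_comm 1 0) (h₃.elim _ _)
  obtain ⟨ψ, rfl⟩ := (Ext.mk₀_bijective _ _).2 y
  exact ⟨ψ, (Ext.mk₀_bijective _ _).1 (by rw [← hy, Ext.mk₀_comp_mk₀])⟩

end Ext

section Devissage

variable {R : Type u} [CommRing R] [IsNoetherianRing R] [IsLocalRing R]

theorem finite_module_devissage {P : ModuleCat.{w} R → Prop}
    (subsingleton : ∀ N : ModuleCat.{w} R, Subsingleton N → P N)
    (residue : ∀ N : ModuleCat.{w} R, (N ≃ₗ[R] R ⧸ maximalIdeal R) → P N)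
    (extension : ∀ S : ShortComplex (ModuleCat.{w} R), S.ShortExact → P S.X₁ → P S.X₃ → P S.X₂)
    (quotSMulTop : ∀ (N : ModuleCat.{w} R) [Module.Finite R N], ∀ x ∈ maximalIdeal R,
      IsSMulRegular N x → P (ModuleCat.of R (QuotSMulTop x N)) → P N)
    (N : ModuleCat.{w} R) [Module.Finite R N] : P N := by
  suffices H : ∀ (n : ℕ) (N : Type w) [AddCommGroup N] [Module R N] [Module.Finite R N],
      supportDim R N < n → P (ModuleCat.of R N) by
    obtain ⟨n, hn⟩ : ∃ n : ℕ, supportDim R N < n := by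
      have := (supportDim_le_ringKrullDim R N).trans_lt ringKrullDim_lt_top
      simpa using! ENat.WithBot.eq_top_iff_forall_ge.not.mp this.ne
    exact H n N hn
  intro n
  induction n with
  | zero =>
    intro N _ _ _ hN
    refine subsingleton _ (supportDim_eq_bot_iff_subsingleton (R := R) (M := N).mp ?_)
    simpa using ENat.WithBot.add_one_le_natCast_iff.mpr hN
  | succ n ih =>
    intro N _ _ hfin hN
    induction hfin using IsNoetherianRing.induction_on_isQuotientEquivQuotientPrime R with
    | subsingleton N => exact subsingleton _ ‹_›
    | exact N₁ N₂ N₃ f g hf hg hfg h₁ h₃ =>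
      exact extension _ (ModuleCat.shortComplex_shortExact
        (ModuleCat.shortComplexOfCompEqZero f g hfg.linearMap_comp_eq_zero) hfg hf hg)
        (h₁ ((supportDim_le_of_injective f hf).trans_lt hN))
        (h₃ ((supportDim_le_of_surjective g hg).trans_lt hN))
    | quotient N p e =>
      by_cases hp : p.asIdeal = maximalIdeal R
      · exact residue _ (e.trans (Submodule.quotEquivOfEq _ _ hp))
      obtain ⟨x, hxm, hxp⟩ := SetLike.exists_of_lt
        (lt_of_le_of_ne (le_maximalIdeal p.isPrime.ne_top) hp)
      have hx : IsSMulRegular N x := by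
        rw [e.isSMulRegular_congr]
        exact (isSMulRegular_quotient_iff_mem_of_smul_mem _ _).mpr fun y hy =>
          (p.isPrime.mem_or_mem hy).resolve_left hxp
      refine quotSMulTop (ModuleCat.of R N) x hxm hx (ih _ ?_)
      rw [← supportDim_quotSMulTop_succ_eq_supportDim hx hxm] at hN
      exact lt_of_add_lt_add_right hN

variable [Small.{w} R]

theorem hasProjectiveDimensionLE_of_ofList_eq_maximalIdeal {rs : List R} (hrs : IsRegular R rs)
    (hm : Ideal.ofList rs = maximalIdeal R) (N : ModuleCat.{w} R) [Module.Finite R N] :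
    HasProjectiveDimensionLE N rs.length := by
  rw [← projectiveDimension_le_iff]
  refine finite_module_devissage (P := fun N ↦ projectiveDimension N ≤ rs.length)
    (fun N hN ↦ ?_) (fun N e ↦ ?_) (fun S hS h₁ h₃ ↦ ?_) (fun N _ x hx hreg hN ↦ ?_) N
  · rw [(projectiveDimension_eq_bot_iff N).mpr (ModuleCat.isZero_of_subsingleton N)]
    exact bot_le
  · let e' : N ≃ₗ[R] Shrink.{w} (R ⧸ Ideal.ofList rs) :=
      (e.trans (Submodule.quotEquivOfEq _ _ hm.symm)).trans (Shrink.linearEquiv R _).symm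
    rw [projectiveDimension_eq_of_iso (Y := ModuleCat.of R (Shrink.{w} (R ⧸ Ideal.ofList rs)))
      e'.toModuleIso, ModuleCat.projectiveDimension_quotient_eq_length rs hrs]
  · rw [projectiveDimension_le_iff] at h₁ h₃ ⊢
    exact hS.hasProjectiveDimensionLT_X₂ _ h₁ h₃
  · rw [ModuleCat.projectiveDimension_quotSMulTop_eq_succ_of_isSMulRegular N x hreg hx] at hN
    exact (le_add_of_nonneg_right zero_le_one).trans hN

lemma subsingleton_ext_of_subsingleton_ext_quotSMulTop (N M : ModuleCat.{w} R) [Module.Finite R N]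
    [Module.Finite R M] {x : R} (hx : x ∈ maximalIdeal R) (hreg : IsSMulRegular N x) (i : ℕ)
    (h : Subsingleton (Ext (ModuleCat.of R (QuotSMulTop x N)) M (i + 1))) :
    Subsingleton (Ext N M i) := by
  by_contra! hnt
  have hjac : x ∈ (Module.annihilator R (Ext N M i)).jacobson := maximalIdeal_le_jacobson _ hx
  refine Submodule.top_ne_pointwise_smul_of_mem_jacobson_annihilator hjac
    (eq_top_iff.mpr fun y _ ↦ ?_).symm
  obtain ⟨z, rfl⟩ : ∃ z : Ext N M i, x • z = y := by
    obtain ⟨z, hz⟩ : ∃ z : Ext N M i, (Ext.mk₀ (x • 𝟙 N)).comp z (zero_add i) = y :=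
      Ext.contravariant_sequence_exact₁ hreg.smulShortComplex_shortExact M y (add_comm 1 i)
        (h.elim _ _)
    exact ⟨z, by simpa only [Ext.mk₀_smul, Ext.smul_comp, Ext.mk₀_id_comp] using hz⟩
  exact Submodule.smul_mem_pointwise_smul z x ⊤ trivial

omit [IsNoetherianRing R] [Small.{w} R] in
lemma mem_maximalIdeal_of_isRegular {M : Type*} [AddCommGroup M] [Module R M] {rs : List R}
    (hrs : IsRegular M rs) {r : R} (hr : r ∈ rs) : r ∈ maximalIdeal R := by
  have hle : Ideal.ofList rs ≤ maximalIdeal R :=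
    le_maximalIdeal fun h ↦ hrs.top_ne_smul (by rw [h, Submodule.top_smul])
  exact hle (Ideal.subset_span hr)

theorem subsingleton_ext_of_add_supportDim_lt {M : ModuleCat.{w} R} [Module.Finite R M]
    {rs : List R} (hrs : IsRegular M rs) (N : ModuleCat.{w} R) [Module.Finite R N] :
    ∀ i : ℕ, i + supportDim R N < rs.length → Subsingleton (Ext N M i) := by
  refine finite_module_devissage
    (P := fun N ↦ ∀ i : ℕ, i + supportDim R N < rs.length → Subsingleton (Ext N M i))
    (fun N hN i _ ↦ ?_) (fun N e i hi ↦ ?_) (fun S hS h₁ h₃ i hi ↦ ?_)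
    (fun N _ x hx hreg hN i hi ↦ ?_) N
  · have := (ModuleCat.isZero_of_subsingleton N).hasProjectiveDimensionLT_zero
    exact HasProjectiveDimensionLT.subsingleton N 0 i (Nat.zero_le i) M
  · have : Module.Finite R N := .equiv e.symm
    have hsupp : Module.support R N ⊆ PrimeSpectrum.zeroLocus (maximalIdeal R) := by
      rw [Module.support_eq_zeroLocus, e.annihilator_eq, Ideal.annihilator_quotient]
    have hnt : Nontrivial M := hrs.nontrivial
    have hsmul : maximalIdeal R • (⊤ : Submodule R M) < ⊤ :=
      (Submodule.top_ne_ideal_smul_of_le_jacobson_annihilator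
        (maximalIdeal_le_jacobson _)).symm.lt_top
    have hdim : supportDim R N = 0 := by
      rw [supportDim_eq_of_equiv e, supportDim_quotient_eq_ringKrullDim]
      exact ringKrullDim_eq_zero_of_isField
        ((Ideal.Quotient.maximal_ideal_iff_isField_quotient _).mp inferInstance)
    rw [hdim, add_zero] at hi
    exact ModuleCat.subsingleton_ext_of_exists_isRegular _ N hsupp M hsmul rs
      (fun _ ↦ mem_maximalIdeal_of_isRegular hrs) hrs i (by exact_mod_cast hi)
  · have hdim₁ := supportDim_le_of_injective S.f.hom hS.moduleCat_injective_f
    have hdim₃ := supportDim_le_of_surjective S.g.hom hS.moduleCat_surjective_g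
    exact subsingleton_ext_X₂_of_shortExact hS (h₁ i ((by gcongr : _ ≤ _).trans_lt hi))
      (h₃ i ((by gcongr : _ ≤ _).trans_lt hi))
  · refine subsingleton_ext_of_subsingleton_ext_quotSMulTop N M hx hreg i (hN (i + 1) ?_)
    rwa [Nat.cast_add, Nat.cast_one, add_assoc, add_comm 1,
      supportDim_quotSMulTop_succ_eq_supportDim hreg hx]

end Devissage

section RegularSystem

variable {R : Type u} [CommRing R]

lemma exists_isPrime_ringKrullDim_le_ringKrullDim_quotient [Nontrivial R]
    [FiniteRingKrullDim R] :
    ∃ q : Ideal R, q.IsPrime ∧ ringKrullDim R ≤ ringKrullDim (R ⧸ q) := by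
  let l := LTSeries.longestOf (PrimeSpectrum R)
  refine ⟨l.head.asIdeal, l.head.isPrime, ?_⟩
  have hIci : PrimeSpectrum.zeroLocus (l.head.asIdeal : Set R) = Set.Ici l.head := by
    ext p
    rfl
  rw [ringKrullDim_quotient, hIci, ← Order.coheight_eq_krullDim_Ici, ringKrullDim,
    Order.krullDim_eq_length_of_finiteDimensionalOrder]
  exact_mod_cast Order.length_le_coheight_head

open scoped Pointwise in
lemma pointwise_smul_top_eq_span_singleton (x : R) : x • (⊤ : Submodule R R) = span {x} := by
  rw [← Submodule.ideal_span_singleton_smul, smul_eq_mul, mul_top]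

variable [IsLocalRing R]

lemma isLocalRing_quotient_span_singleton {x : R} (hx : x ∈ maximalIdeal R) :
    IsLocalRing (R ⧸ span {x}) :=
  have : Nontrivial (R ⧸ span {x}) := Ideal.Quotient.nontrivial_iff.mpr
    (ne_top_of_le_ne_top (IsPrime.ne_top inferInstance) ((span_singleton_le_iff_mem _).mpr hx))
  .of_surjective' _ Ideal.Quotient.mk_surjective

lemma ofList_map_mk_eq_maximalIdeal {x : R} [IsLocalRing (R ⧸ span {x})] {rs : List R}
    (hm : Ideal.ofList (x :: rs) = maximalIdeal R) :
    Ideal.ofList (rs.map (Ideal.Quotient.mk (span {x}))) = maximalIdeal (R ⧸ span {x}) := by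
  rw [← map_maximalIdeal_of_surjective _ Ideal.Quotient.mk_surjective, ← hm, ofList_cons,
    Ideal.map_sup, map_quotient_self, bot_sup_eq, map_ofList]

variable [IsNoetherianRing R]

lemma le_span_singleton_of_ringKrullDim_lt {x : R} (hx : x ∈ maximalIdeal R)
    [(span {x}).IsPrime] (q : Ideal R)
    (hdim : ringKrullDim (R ⧸ span {x}) < ringKrullDim (R ⧸ q)) : q ≤ span {x} := by
  intro y hyq
  by_contra hyx
  let N := QuotSMulTop x (R ⧸ q)
  have hxN : x ∈ Module.annihilator R N :=
    Module.mem_annihilator.mpr fun n ↦ by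
      obtain ⟨n, rfl⟩ := Submodule.Quotient.mk_surjective _ n
      exact (Submodule.Quotient.mk_eq_zero _).mpr (Submodule.smul_mem_pointwise_smul n x ⊤ trivial)
  have hyN : y ∈ Module.annihilator R N :=
    (Submodule.mkQ _).annihilator_le_of_surjective (Submodule.mkQ_surjective _)
      (by rwa [Ideal.annihilator_quotient])
  refine hdim.not_ge ?_
  calc ringKrullDim (R ⧸ q) ≤ supportDim R N + 1 := by
        rw [← supportDim_quotient_eq_ringKrullDim]
        exact supportDim_le_supportDim_quotSMulTop_succ hx
    _ = ringKrullDim (R ⧸ Module.annihilator R N) + 1 := by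
        rw [supportDim_eq_ringKrullDim_quotient_annihilator]
    _ ≤ ringKrullDim (R ⧸ span {x}) :=
        ringKrullDim_succ_le_of_surjective
          (Ideal.Quotient.factor ((span_singleton_le_iff_mem _).mpr hxN))
          (Ideal.Quotient.factor_surjective _) (r := Ideal.Quotient.mk _ y)
          (mem_nonZeroDivisors_of_ne_zero (Ideal.Quotient.eq_zero_iff_mem.not.mpr hyx))
          (Ideal.Quotient.eq_zero_iff_mem.mpr hyN)

lemma isDomain_of_isPrime_span_singleton {x : R} (hx : x ∈ maximalIdeal R)
    [(span {x}).IsPrime] (hdim : ringKrullDim (R ⧸ span {x}) < ringKrullDim R) : IsDomain R := by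
  obtain ⟨q, hq, hRq⟩ := exists_isPrime_ringKrullDim_le_ringKrullDim_quotient (R := R)
  have hqx : q ≤ span {x} := le_span_singleton_of_ringKrullDim_lt hx q (hdim.trans_le hRq)
  have hxq : x ∉ q := fun h ↦
    (hdim.trans_le hRq).ne (by rw [hqx.antisymm ((span_singleton_le_iff_mem _).mpr h)])
  have hqbot : q = ⊥ := by
    refine Submodule.eq_bot_of_le_smul_of_le_jacobson_bot (maximalIdeal R) q
      (IsNoetherian.noetherian _) (fun y hy ↦ ?_) (maximalIdeal_le_jacobson _)
    obtain ⟨z, rfl⟩ := mem_span_singleton.mp (hqx hy)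
    exact mul_mem_mul hx ((hq.mem_or_mem hy).resolve_left hxq)
  subst hqbot
  exact IsDomain.of_bot_isPrime R

lemma ringKrullDim_le_length_of_ofList_eq_maximalIdeal {rs : List R}
    (hm : Ideal.ofList rs = maximalIdeal R) : ringKrullDim R ≤ rs.length := by
  classical
  have hspan : span (rs.toFinset : Set R) = maximalIdeal R := by
    rw [← hm, List.coe_toFinset, Ideal.ofList]
  have hrank := Submodule.spanFinrank_span_le_ncard_of_finite (R := R) rs.toFinset.finite_toSet
  rw [submodule_span_eq, hspan, Set.ncard_coe_finset] at hrank
  exact (ringKrullDim_le_spanFinrank_maximalIdeal R).trans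
    (by exact_mod_cast hrank.trans rs.toFinset_card_le)

lemma le_ringKrullDim_quotient_span_singleton {x : R} (hx : x ∈ maximalIdeal R) {n : ℕ}
    (hn : (n + 1 : ℕ) ≤ ringKrullDim R) : n ≤ ringKrullDim (R ⧸ span {x}) := by
  have h := hn.trans (ringKrullDim_le_ringKrullDim_quotSMulTop_succ hx)
  rw [pointwise_smul_top_eq_span_singleton, Nat.cast_succ] at h
  exact ENat.WithBot.add_le_add_one_right_iff.mp h

end RegularSystem

theorem isDomain_and_isRegular_of_length_eq {n : ℕ} :
    ∀ {R : Type u} [CommRing R] [IsNoetherianRing R] [IsLocalRing R] {rs : List R},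
      rs.length = n → Ideal.ofList rs = maximalIdeal R → n ≤ ringKrullDim R →
        IsDomain R ∧ IsRegular R rs := by
  induction n with
  | zero =>
    intro R _ _ _ rs hlen hm _
    obtain rfl := List.length_eq_zero_iff.mp hlen
    have hfield : IsField R := isField_iff_maximalIdeal_eq.mpr (by rw [← hm, ofList_nil])
    exact ⟨hfield.isDomain, .nil R R⟩
  | succ n ih =>
    intro R _ _ _ rs hlen hm hdim
    obtain ⟨x, rs, rfl⟩ := List.exists_cons_of_length_eq_add_one hlen
    have hx : x ∈ maximalIdeal R := hm ▸ Ideal.subset_span List.mem_cons_self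
    have := isLocalRing_quotient_span_singleton hx
    have hlen' : (rs.map (Ideal.Quotient.mk (span {x}))).length = n := by simpa using hlen
    have hm' := ofList_map_mk_eq_maximalIdeal hm
    obtain ⟨hdom, hreg⟩ := ih hlen' hm' (le_ringKrullDim_quotient_span_singleton hx hdim)
    have hprime : (span {x}).IsPrime := (Ideal.Quotient.isDomain_iff_prime _).mp hdom
    have hlt : ringKrullDim (R ⧸ span {x}) < ringKrullDim R := by
      refine (ringKrullDim_le_length_of_ofList_eq_maximalIdeal hm').trans_lt
        (lt_of_lt_of_le ?_ hdim)
      rw [hlen']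
      exact_mod_cast n.lt_succ_self
    have hR : IsDomain R := isDomain_of_isPrime_span_singleton hx hlt
    have hx0 : x ≠ 0 := by
      rintro rfl
      exact hlt.ne (ringKrullDim_eq_of_ringEquiv
        ((quotEquivOfEq span_zero).trans (RingEquiv.quotientBot R)))
    let e : (R ⧸ span {x}) ≃ₗ[R ⧸ span {x}] QuotSMulTop x R :=
      (Submodule.quotEquivOfEq _ _
        (pointwise_smul_top_eq_span_singleton x).symm).extendScalarsOfSurjective
          Ideal.Quotient.mk_surjective
    exact ⟨hR, (isRegular_cons_iff' R x rs).mpr ⟨.of_ne_zero hx0, (e.isRegular_congr _).mp hreg⟩⟩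

theorem isRegular_of_ofList_eq_maximalIdeal {R : Type u} [CommRing R] [IsNoetherianRing R]
    [IsLocalRing R] {rs : List R} (hm : Ideal.ofList rs = maximalIdeal R)
    (hdim : rs.length ≤ ringKrullDim R) : IsRegular R rs :=
  (isDomain_and_isRegular_of_length_eq rfl hm hdim).2

section CohenMacaulay

variable {R : Type u} [CommRing R] [IsNoetherianRing R] [IsLocalRing R]

lemma exists_ringKrullDim_quotient_eq_natCast {I : Ideal R} (hI : I ≠ ⊤) :
    ∃ n : ℕ, ringKrullDim (R ⧸ I) = n := by
  have : Nontrivial (R ⧸ I) := Ideal.Quotient.nontrivial_iff.mpr hI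
  have : IsLocalRing (R ⧸ I) := .of_surjective' _ Ideal.Quotient.mk_surjective
  obtain ⟨d, hd⟩ := WithBot.ne_bot_iff_exists.mp (ringKrullDim_ne_bot (R := R ⧸ I))
  have hd_top : d ≠ ⊤ := by
    rintro rfl
    exact ringKrullDim_ne_top hd.symm
  obtain ⟨n, rfl⟩ := ENat.ne_top_iff_exists.mp hd_top
  exact ⟨n, hd.symm⟩

lemma mem_minimalPrimes_of_ringKrullDim_quotient_le {I p : Ideal R} [p.IsPrime] (hIp : I ≤ p)
    (hdim : ringKrullDim (R ⧸ I) ≤ ringKrullDim (R ⧸ p)) : p ∈ I.minimalPrimes := by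
  obtain ⟨q, hq, hqp⟩ := Ideal.exists_minimalPrimes_le hIp
  have : q.IsPrime := hq.1.1
  suffices hpq : p ≤ q by rwa [hpq.antisymm hqp]
  intro y hyp
  by_contra hyq
  have hlt : ringKrullDim (R ⧸ p) + 1 ≤ ringKrullDim (R ⧸ p) :=
    calc ringKrullDim (R ⧸ p) + 1 ≤ ringKrullDim (R ⧸ q) :=
          ringKrullDim_succ_le_of_surjective (Ideal.Quotient.factor hqp)
            (Ideal.Quotient.factor_surjective hqp) (r := Ideal.Quotient.mk _ y)
            (mem_nonZeroDivisors_of_ne_zero (Ideal.Quotient.eq_zero_iff_mem.not.mpr hyq))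
            (Ideal.Quotient.eq_zero_iff_mem.mpr hyp)
      _ ≤ ringKrullDim (R ⧸ I) :=
          ringKrullDim_le_of_surjective _ (Ideal.Quotient.factor_surjective hq.1.2)
      _ ≤ ringKrullDim (R ⧸ p) := hdim
  obtain ⟨n, hn⟩ := exists_ringKrullDim_quotient_eq_natCast (IsPrime.ne_top ‹p.IsPrime›)
  rw [hn] at hlt
  exact absurd hlt (by exact_mod_cast n.lt_succ_self.not_ge)

theorem exists_isRegular_isAssociatedPrime_quotient {rs : List R} (hrs : IsRegular R rs)
    (hdim : ringKrullDim R ≤ rs.length) (p : Ideal R) [hp : p.IsPrime] :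
    ∃ ys : List R, IsRegular R ys ∧ IsAssociatedPrime p (R ⧸ Ideal.ofList ys) := by
  obtain ⟨n, hn⟩ := exists_ringKrullDim_quotient_eq_natCast hp.ne_top
  obtain ⟨ys, hlen, hys, hreg⟩ := ModuleCat.exists_isRegular_of_exists_subsingleton_ext p
    (rs.length - n) (ModuleCat.of R R)
    (by simpa only [smul_eq_mul, mul_top] using! hp.ne_top.lt_top) (ModuleCat.of R (R ⧸ p))
    (by rw [support_eq_zeroLocus, annihilator_quotient])
    (fun i hi ↦ subsingleton_ext_of_add_supportDim_lt (M := ModuleCat.of R R) hrs _ i (by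
      rw [supportDim_quotient_eq_ringKrullDim, hn]
      exact_mod_cast Nat.add_lt_of_lt_sub hi))
  refine ⟨ys, hreg, ?_⟩
  have hle : Ideal.ofList ys ≤ p := Ideal.span_le.mpr hys
  have hdim_le : ringKrullDim (R ⧸ Ideal.ofList ys) ≤ ringKrullDim (R ⧸ p) := by
    obtain ⟨k, hk⟩ := exists_ringKrullDim_quotient_eq_natCast
      (ne_top_of_le_ne_top hp.ne_top hle)
    rw [← ringKrullDim_add_length_eq_ringKrullDim_of_isRegular ys hreg, hlen, hk] at hdim
    rw [hn, hk]
    norm_cast at hdim ⊢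
    omega
  have hmin := mem_minimalPrimes_of_ringKrullDim_quotient_le hle hdim_le
  rw [← annihilator_quotient (I := Ideal.ofList ys)] at hmin
  exact associatedPrimes.minimalPrimes_annihilator_subset_associatedPrimes _ _ hmin

end CohenMacaulay

section CharacterModule

variable {R : Type u} [CommRing R] [Small.{w} R] {B : Type w} [AddCommGroup B] [Module R B]

lemma subsingleton_ext_quotSMulTop_characterModule {N : Type w} [AddCommGroup N] [Module R N]
    {r : R} (hN : IsSMulRegular N r) (hNB : IsSMulRegular (N ⊗[R] B) r)
    (hExt : ∀ i : ℕ, Subsingleton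
      (Ext (ModuleCat.of R N) (ModuleCat.of R (CharacterModule B)) (i + 1))) :
    ∀ i : ℕ, Subsingleton
      (Ext (ModuleCat.of R (QuotSMulTop r N)) (ModuleCat.of R (CharacterModule B)) (i + 1)) := by
  have hS := IsSMulRegular.smulShortComplex_shortExact (M := ModuleCat.of R N) hN
  have hinj : Function.Injective ((LinearMap.lsmul R N r).rTensor B) :=
    (congrArg DFunLike.coe (LinearMap.rTensor_smul_action B N r)).symm.subst hNB
  have hlift : ∀ φ : ModuleCat.of R N ⟶ ModuleCat.of R (CharacterModule B),
      ∃ ψ, ((ModuleCat.of R N).smulShortComplex r).f ≫ ψ = φ := fun φ ↦ by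
    obtain ⟨ψ, hψ⟩ := rTensor_injective_iff_lcomp_surjective.mp hinj φ.hom
    exact ⟨ModuleCat.ofHom ψ, ModuleCat.hom_ext hψ⟩
  intro i
  cases i with
  | zero => exact subsingleton_ext_one_X₃_of_shortExact hS hlift (hExt 0)
  | succ i => exact subsingleton_ext_X₃_of_shortExact hS (hExt i) (hExt (i + 1))

theorem subsingleton_ext_quotient_ofList_characterModule {rs : List R} (N : Type w)
    [AddCommGroup N] [Module R N] (hN : IsWeaklyRegular N rs)
    (hNB : IsWeaklyRegular (N ⊗[R] B) rs)
    (hExt : ∀ i : ℕ, Subsingleton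
      (Ext (ModuleCat.of R N) (ModuleCat.of R (CharacterModule B)) (i + 1))) :
    ∀ i : ℕ, Subsingleton (Ext (ModuleCat.of R (N ⧸ (Ideal.ofList rs • ⊤ : Submodule R N)))
      (ModuleCat.of R (CharacterModule B)) (i + 1)) := by
  induction rs generalizing N with
  | nil =>
    intro i
    let e : N ≃ₗ[R] N ⧸ (Ideal.ofList ([] : List R) • ⊤ : Submodule R N) :=
      (Submodule.quotEquivOfEqBot (Ideal.ofList ([] : List R) • ⊤ : Submodule R N)
        (by rw [Ideal.ofList_nil, Submodule.bot_smul])).symm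
    exact subsingleton_ext_of_iso e.toModuleIso (hExt i)
  | cons r rs ih =>
    rw [isWeaklyRegular_cons_iff] at hN hNB
    let e := QuotSMulTop.quotSMulTopTensorEquivQuotSMulTop r B N
    have h := ih (QuotSMulTop r N) hN.2 ((e.isWeaklyRegular_congr rs).mpr hNB.2)
      (subsingleton_ext_quotSMulTop_characterModule hN.1 hNB.1 hExt)
    exact fun i ↦ subsingleton_ext_of_iso
      (Submodule.quotOfListConsSMulTopEquivQuotSMulTopInner N r rs).symm.toModuleIso (h i)

lemma subsingleton_ext_shrink_quotient_characterModule {rs : List R} (hR : IsWeaklyRegular R rs)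
    (hB : IsWeaklyRegular B rs) (i : ℕ) :
    Subsingleton (Ext (ModuleCat.of R (Shrink.{w} (R ⧸ Ideal.ofList rs)))
      (ModuleCat.of R (CharacterModule B)) (i + 1)) := by
  let e : Shrink.{w} R ≃ₗ[R] R := Shrink.linearEquiv R R
  let eB : Shrink.{w} R ⊗[R] B ≃ₗ[R] B := (e.rTensor B).trans (TensorProduct.lid R B)
  have hproj : Projective (ModuleCat.of R (Shrink.{w} R)) :=
    (IsProjective.iff_projective (R := R) _).mp inferInstance
  have h := subsingleton_ext_quotient_ofList_characterModule (Shrink.{w} R)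
    ((e.isWeaklyRegular_congr rs).mpr hR) ((eB.isWeaklyRegular_congr rs).mpr hB)
    (fun i ↦ Ext.subsingleton_of_projective _ _ i)
  let eQ : (Shrink.{w} R ⧸ (Ideal.ofList rs • ⊤ : Submodule R (Shrink.{w} R))) ≃ₗ[R]
      R ⧸ Ideal.ofList rs :=
    Submodule.Quotient.equiv _ _ e (by
      rw [Submodule.map_smul'', Submodule.map_top, LinearEquiv.range, smul_eq_mul, mul_top])
  exact subsingleton_ext_of_iso
    (eQ.trans (Shrink.linearEquiv R (R ⧸ Ideal.ofList rs)).symm).toModuleIso (h i)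

lemma flat_of_subsingleton_ext_one_characterModule
    (h : ∀ J : Ideal R, Subsingleton
      (Ext (ModuleCat.of R (Shrink.{w} (R ⧸ J))) (ModuleCat.of R (CharacterModule B)) 1)) :
    Module.Flat R B := by
  refine Flat.iff_rTensor_injective'.mpr fun J ↦
    rTensor_injective_iff_lcomp_surjective.mpr fun φ ↦ ?_
  let eR : Shrink.{w} R ≃ₗ[R] R := Shrink.linearEquiv R R
  let eJ : Shrink.{w} J ≃ₗ[R] J := Shrink.linearEquiv R J
  let eQ : Shrink.{w} (R ⧸ J) ≃ₗ[R] R ⧸ J := Shrink.linearEquiv R (R ⧸ J)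
  let f : Shrink.{w} J →ₗ[R] Shrink.{w} R := eR.symm.toLinearMap ∘ₗ J.subtype ∘ₗ eJ.toLinearMap
  let g : Shrink.{w} R →ₗ[R] Shrink.{w} (R ⧸ J) := eQ.symm.toLinearMap ∘ₗ J.mkQ ∘ₗ eR.toLinearMap
  have hf : Function.Injective f :=
    eR.symm.injective.comp (J.subtype_injective.comp eJ.injective)
  have hg : Function.Surjective g :=
    eQ.symm.surjective.comp (J.mkQ_surjective.comp eR.surjective)
  have hfg : Function.Exact f g := by
    refine Function.Exact.of_ladder_linearEquiv_of_exact (e₁ := eJ.symm) (e₂ := eR.symm)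
      (e₃ := eQ.symm) ?_ ?_ (LinearMap.exact_subtype_mkQ J) <;> ext <;> simp [f, g]
  obtain ⟨ψ, hψ⟩ := exists_comp_eq_of_subsingleton_ext_one (ModuleCat.shortComplex_shortExact
    (ModuleCat.shortComplexOfCompEqZero f g hfg.linearMap_comp_eq_zero) hfg hf hg) (h J)
    (ModuleCat.ofHom (φ ∘ₗ eJ.toLinearMap))
  refine ⟨ψ.hom ∘ₗ eR.symm.toLinearMap, LinearMap.ext fun x ↦ ?_⟩
  have hx := ConcreteCategory.congr_hom hψ (eJ.symm x)
  simpa [f] using hx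

end CharacterModule

section Flat

variable {R : Type u} [CommRing R] [IsNoetherianRing R] [IsLocalRing R]

theorem subsingleton_ext_characterModule_of_finite [Small.{w} R] {B : Type w} [AddCommGroup B]
    [Module R B] {rs : List R} (hm : Ideal.ofList rs = maximalIdeal R)
    (hdim : rs.length ≤ ringKrullDim R)
    (hB : ∀ ys : List R, IsRegular R ys → IsWeaklyRegular B ys) (k : ℕ) :
    ∀ i : ℕ, rs.length ≤ i + k → ∀ (N : Type w) [AddCommGroup N] [Module R N] [Module.Finite R N],
      Subsingleton (Ext (ModuleCat.of R N) (ModuleCat.of R (CharacterModule B)) (i + 1)) := by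
  have hrs := isRegular_of_ofList_eq_maximalIdeal hm hdim
  induction k with
  | zero =>
    intro i hi N _ _ _
    have := hasProjectiveDimensionLE_of_ofList_eq_maximalIdeal hrs hm (ModuleCat.of R N)
    exact HasProjectiveDimensionLT.subsingleton _ (rs.length + 1) (i + 1) (by lia) _
  | succ k ih =>
    intro i hi N _ _ hfin
    induction hfin using IsNoetherianRing.induction_on_isQuotientEquivQuotientPrime R with
    | subsingleton N =>
      have := (ModuleCat.isZero_of_subsingleton (ModuleCat.of R N)).hasProjectiveDimensionLT_zero
      exact HasProjectiveDimensionLT.subsingleton (ModuleCat.of R N) 0 (i + 1) (Nat.zero_le _) _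
    | exact N₁ N₂ N₃ f g hf hg hfg h₁ h₃ =>
      exact subsingleton_ext_X₂_of_shortExact (ModuleCat.shortComplex_shortExact
        (ModuleCat.shortComplexOfCompEqZero f g hfg.linearMap_comp_eq_zero) hfg hf hg) h₁ h₃
    | quotient N p e =>
      obtain ⟨ys, hreg, hass⟩ := exists_isRegular_isAssociatedPrime_quotient hrs
        (ringKrullDim_le_length_of_ofList_eq_maximalIdeal hm) p.asIdeal
      obtain ⟨f, hf⟩ := ((isAssociatedPrime_iff_exists_injective_linearMap _ _).mp hass).2
      let g : N →ₗ[R] Shrink.{w} (R ⧸ Ideal.ofList ys) :=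
        (Shrink.linearEquiv R (R ⧸ Ideal.ofList ys)).symm.toLinearMap ∘ₗ f ∘ₗ e.toLinearMap
      have hg : Function.Injective g :=
        (Shrink.linearEquiv R (R ⧸ Ideal.ofList ys)).symm.injective.comp (hf.comp e.injective)
      have hS := ModuleCat.shortComplex_shortExact
        (ModuleCat.shortComplexOfCompEqZero g g.range.mkQ (LinearMap.range_mkQ_comp g))
        (LinearMap.exact_map_mkQ_range g) hg (Submodule.mkQ_surjective _)
      have : Module.Finite R (Shrink.{w} (R ⧸ Ideal.ofList ys)) :=
        .equiv (Shrink.linearEquiv R (R ⧸ Ideal.ofList ys)).symm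
      exact subsingleton_ext_X₁_of_shortExact hS
        (subsingleton_ext_shrink_quotient_characterModule hreg.toIsWeaklyRegular (hB ys hreg) i)
        (ih (i + 1) (by lia) _)

theorem flat_of_isRegular_imp_isWeaklyRegular {rs : List R} (hm : Ideal.ofList rs = maximalIdeal R)
    (hdim : rs.length ≤ ringKrullDim R) {B : Type v} [AddCommGroup B] [Module R B]
    (hB : ∀ ys : List R, IsRegular R ys → IsWeaklyRegular B ys) :
    Module.Flat R B := by
  let e : ULift.{u} B ≃ₗ[R] B := ULift.moduleEquiv
  suffices Module.Flat R (ULift.{u} B) from .of_linearEquiv e.symm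
  refine flat_of_subsingleton_ext_one_characterModule fun J ↦ ?_
  have : Module.Finite R (Shrink.{max u v} (R ⧸ J)) := .equiv (Shrink.linearEquiv R (R ⧸ J)).symm
  exact subsingleton_ext_characterModule_of_finite hm hdim
    (fun ys hreg ↦ (e.isWeaklyRegular_congr ys).mpr (hB ys hreg)) rs.length 0 (by lia) _

end Flat

section SystemOfParameters

section Noetherian

variable {R : Type*} [CommRing R] [IsLocalRing R]

lemma radical_eq_maximalIdeal_of_forall_isPrime {I : Ideal R} (hI : I ≤ maximalIdeal R)
    (h : ∀ P : Ideal R, P.IsPrime → I ≤ P → maximalIdeal R ≤ P) : I.radical = maximalIdeal R := by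
  refine le_antisymm ((maximalIdeal.isMaximal R).isPrime.radical_le_iff.mpr hI) ?_
  rw [Ideal.radical_eq_sInf]
  exact le_sInf fun P hP ↦ h P hP.2 hP.1

variable [IsNoetherianRing R]

variable (R) in
lemma exists_radical_ofList_eq_maximalIdeal :
    ∃ xs : List R, xs.length = ringKrullDim R ∧ (Ideal.ofList xs).radical = maximalIdeal R := by
  obtain ⟨s, hs, hcard⟩ := exists_finset_card_eq_height_of_isNoetherianRing (maximalIdeal R)
  have hspan : Ideal.ofList s.toList = span (s : Set R) := by simp [Ideal.ofList]
  refine ⟨s.toList, ?_, ?_⟩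
  · rw [← maximalIdeal_height_eq_ringKrullDim, ← hcard, Finset.length_toList]
    rfl
  · rw [hspan]
    exact radical_eq_maximalIdeal_of_forall_isPrime hs.1.2
      fun P hP hsP ↦ hs.2 ⟨hP, hsP⟩ (le_maximalIdeal hP.ne_top)

lemma exists_radical_ofList_append_eq_maximalIdeal {ys : List R} (hreg : IsRegular R ys) :
    ∃ zs : List R, (ys ++ zs).length = ringKrullDim R ∧
      (Ideal.ofList (ys ++ zs)).radical = maximalIdeal R := by
  let q := Ideal.Quotient.mk (Ideal.ofList ys)
  have hq : Function.Surjective q := Ideal.Quotient.mk_surjective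
  have : Nontrivial (R ⧸ Ideal.ofList ys) := Ideal.Quotient.nontrivial_iff.mpr
    fun h ↦ hreg.top_ne_smul (by rw [h, Submodule.top_smul])
  have : IsLocalRing (R ⧸ Ideal.ofList ys) := .of_surjective' q hq
  have : IsLocalHom q := .of_surjective _ hq
  obtain ⟨xs, hlen, hrad⟩ := exists_radical_ofList_eq_maximalIdeal (R ⧸ Ideal.ofList ys)
  obtain ⟨zs, rfl⟩ := List.map_surjective_iff.mpr hq xs
  refine ⟨zs, ?_, ?_⟩
  · rw [← ringKrullDim_add_length_eq_ringKrullDim_of_isRegular ys hreg, ← hlen]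
    simp [add_comm]
  · have hcomap : (Ideal.ofList (zs.map q)).comap q = Ideal.ofList (ys ++ zs) := by
      rw [← Ideal.map_ofList, Ideal.comap_map_of_surjective q hq, ← RingHom.ker_eq_comap_bot,
        Ideal.mk_ker, Ideal.ofList_append, sup_comm]
    rw [← hcomap, ← Ideal.comap_radical, hrad, maximalIdeal_comap]

end Noetherian

section Integral

variable {R S : Type*} [CommRing R] [CommRing S] [Algebra R S] [Algebra.IsIntegral R S]

lemma ringKrullDim_eq_of_isIntegral [FaithfulSMul R S] : ringKrullDim S = ringKrullDim R := by
  refine le_antisymm (Order.krullDim_le_of_strictMono (PrimeSpectrum.comap (algebraMap R S))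
    fun P Q hPQ ↦ Ideal.IsIntegral.comap_lt_comap (R := R) hPQ) (iSup_le fun l ↦ ?_)
  obtain ⟨Q, -, hQ, hQl⟩ := Ideal.exists_ideal_over_prime_of_isIntegral l.head.asIdeal (⊥ : Ideal S)
    (by simp [← RingHom.ker_eq_comap_bot])
  have : Q.LiesOver l.head.asIdeal := ⟨hQl.symm⟩
  obtain ⟨L, hL, -⟩ := Ideal.exists_ltSeries_of_hasGoingUp l Q
  exact hL ▸ Order.LTSeries.length_le_krullDim L

lemma radical_map_eq_maximalIdeal [IsLocalRing R] [IsLocalRing S] {I : Ideal R}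
    (hI : I.radical = maximalIdeal R) : (I.map (algebraMap R S)).radical = maximalIdeal S := by
  have hcomap : (maximalIdeal S).comap (algebraMap R S) = maximalIdeal R :=
    eq_maximalIdeal (isMaximal_comap_of_isIntegral_of_isMaximal _)
  refine radical_eq_maximalIdeal_of_forall_isPrime
    (Ideal.map_le_iff_le_comap.mpr (hcomap ▸ hI ▸ Ideal.le_radical)) fun P hP hIP ↦ ?_
  have hle : maximalIdeal R ≤ P.comap (algebraMap R S) :=
    hI ▸ (hP.comap _).radical_le_iff.mpr (Ideal.map_le_iff_le_comap.mp hIP)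
  have hmax : (P.comap (algebraMap R S)).IsMaximal :=
    (maximalIdeal.isMaximal R).eq_of_le (hP.comap _).ne_top hle ▸ maximalIdeal.isMaximal R
  exact (eq_maximalIdeal (isMaximal_of_isIntegral_of_isMaximal_comap (R := R) P hmax)).ge

lemma isWeaklyRegular_of_isBigCohenMacaulay [IsLocalRing R] [IsNoetherianRing R]
    [FaithfulSMul R S] {hS : IsLocalRing S} {B : Type*} [CommRing B] [Algebra S B] [Algebra R B]
    [IsScalarTower R S B] (hB : IsBigCohenMacaulay S hS B) {ys : List R}
    (hreg : IsRegular R ys) : IsWeaklyRegular B ys := by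
  obtain ⟨zs, hlen, hrad⟩ := exists_radical_ofList_append_eq_maximalIdeal hreg
  have hradS : (Ideal.ofList ((ys ++ zs).map (algebraMap R S))).radical = maximalIdeal S :=
    Ideal.map_ofList (algebraMap R S) (ys ++ zs) ▸ radical_map_eq_maximalIdeal hrad
  have hregB := hB _
    (by rw [List.length_map, hlen, ringKrullDim_eq_of_isIntegral (R := R) (S := S)])
    (fun x hx ↦ hradS ▸ Ideal.le_radical (Ideal.subset_span hx)) hradS
  exact ((isWeaklyRegular_append_iff B ys zs).mp ((isWeaklyRegular_map_algebraMap_iff S B _).mp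
    ((isWeaklyRegular_map_algebraMap_iff B B _).mp hregB.toIsWeaklyRegular))).1

end Integral

end SystemOfParameters

section SymbolicPower

variable {R : Type*} [CommRing R] {I : Ideal R}

lemma pow_le_symbolicPower (I : Ideal R) (k : ℕ) : I ^ k ≤ symbolicPower I k :=
  Ideal.le_comap_map

lemma isSMulRegular_quotient_symbolicPower {c : R} (hc : c ∈ assPrimesCompl I) (k : ℕ) :
    IsSMulRegular (R ⧸ symbolicPower I k) c := by
  refine (isSMulRegular_quotient_iff_mem_of_smul_mem _ _).mpr fun x hx ↦ ?_
  rw [smul_eq_mul, symbolicPower, Ideal.mem_comap, map_mul] at hx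
  exact (Ideal.unit_mul_mem_iff_mem _
    (IsLocalization.map_units (Localization (assPrimesCompl I)) ⟨c, hc⟩)).mp hx

lemma exists_mem_assPrimesCompl_of_forall_not_le [IsNoetherianRing R] {J : Ideal R}
    (hJ : ∀ p ∈ associatedPrimes R (R ⧸ I), ¬ J ≤ p) : ∃ c ∈ J, c ∈ assPrimesCompl I := by
  by_contra! hcon
  have hsub : (J : Set R) ⊆ ⋃ p ∈ associatedPrimes R (R ⧸ I), ((id p : Ideal R) : Set R) := by
    intro c hcJ
    have hc := hcon c hcJ
    simpa [assPrimesCompl] using hc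
  obtain ⟨p, hp, hJp⟩ := (Ideal.subset_union_prime_finite
    (associatedPrimes.finite R (R ⧸ I)) ⊤ ⊤ fun p hp _ _ ↦ hp.isPrime).mp hsub
  exact hJ p hp hJp

end SymbolicPower

section FlatExtension

variable {R B : Type*} [CommRing R] [CommRing B] [Algebra R B] [Module.Flat R B] {J : Ideal R}

lemma mem_map_of_smul_mem_map_of_isSMulRegular {c : R} (hc : IsSMulRegular (R ⧸ J) c) {b : B}
    (hb : c • b ∈ J.map (algebraMap R B)) : b ∈ J.map (algebraMap R B) := by
  have hreg : IsSMulRegular (B ⧸ (J • ⊤ : Submodule R B)) c :=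
    ((TensorProduct.quotTensorEquivQuotSMul B J).isSMulRegular_congr c).mp (hc.rTensor B)
  have hJ (x : B) : x ∈ (J • ⊤ : Submodule R B) ↔ x ∈ J.map (algebraMap R B) := by
    rw [Ideal.smul_top_eq_map, Submodule.restrictScalars_mem]
  exact (hJ b).mp (mem_of_isSMulRegular_quotient_of_smul_mem hreg ((hJ _).mpr hb))

lemma mem_map_symbolicPower_of_flat [IsNoetherianRing R] {I : Ideal R} {k : ℕ} {b : B}
    (h : ∀ p ∈ associatedPrimes R (R ⧸ I), ∃ c ∉ p, c • b ∈ (I ^ k).map (algebraMap R B)) :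
    b ∈ (symbolicPower I k).map (algebraMap R B) := by
  let J : Ideal R := (((I ^ k).map (algebraMap R B)).colon {b}).comap (algebraMap R B)
  have hJ (c : R) : c ∈ J ↔ c • b ∈ (I ^ k).map (algebraMap R B) := by
    rw [Ideal.mem_comap, Submodule.mem_colon_singleton, smul_eq_mul, Algebra.smul_def]
  obtain ⟨c, hcJ, hc⟩ := exists_mem_assPrimesCompl_of_forall_not_le (I := I) (J := J)
    fun p hp hle ↦ by
      obtain ⟨c, hcp, hcb⟩ := h p hp
      exact hcp (hle ((hJ c).mpr hcb))
  exact mem_map_of_smul_mem_map_of_isSMulRegular (isSMulRegular_quotient_symbolicPower hc k)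
    (Ideal.map_mono (pow_le_symbolicPower I k) ((hJ c).mp hcJ))

end FlatExtension

lemma isIntegral_integralClosure_adjoin_singleton {R L : Type*} [CommRing R] [CommRing L]
    [Algebra R L] {x : L} (hx : IsIntegral R x) :
    Algebra.IsIntegral R ((integralClosure (Algebra.adjoin R {x}) L).restrictScalars R) where
  isIntegral y := by
    have : Algebra.IsIntegral R (Algebra.adjoin R {x}) :=
      .adjoin fun z hz ↦ Set.mem_singleton_iff.mp hz ▸ hx
    exact (isIntegral_algebraMap_iff (B := L) Subtype.val_injective).mp
      (isIntegral_trans (R := R) (A := Algebra.adjoin R {x}) (y : L) y.2)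

theorem stmt10_general {R S B : Type*} [CommRing R] (hR : IsRegularLocal R) [CommRing S]
    [Algebra R S] [Algebra.IsIntegral R S] [FaithfulSMul R S] (hS : IsLocalRing S) [CommRing B]
    [Algebra S B] [Algebra R B] [IsScalarTower R S B] (hB : IsBigCohenMacaulay S hS B)
    (I : Ideal R) (k : ℕ) (b : B)
    (hc : ∀ p ∈ associatedPrimes R (R ⧸ I), ∃ c : R, c ∉ p ∧
      algebraMap R B c * b ∈ Ideal.map (algebraMap R B) (I ^ k)) :
    b ∈ Ideal.map (algebraMap R B) (symbolicPower I k) := by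
  obtain ⟨_, _, t, ht, hcard⟩ := hR
  have hm : Ideal.ofList t.toList = maximalIdeal R := by simpa [Ideal.ofList] using ht
  have hdim : t.toList.length ≤ ringKrullDim R := by rw [Finset.length_toList, ← hcard]
  have : Module.Flat R B := flat_of_isRegular_imp_isWeaklyRegular hm hdim
    fun _ hreg ↦ isWeaklyRegular_of_isBigCohenMacaulay hB hreg
  exact mem_map_symbolicPower_of_flat (by simpa only [Algebra.smul_def] using hc)

theorem stmt10 {R : Type*} [CommRing R] [IsDomain R] [IsLocalRing R]
    (hreg : IsRegularLocal R) [IsAdicComplete (maximalIdeal R) R]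
    (I : Ideal R) (M h n : ℕ) (hM : 1 ≤ M) (hh : 1 ≤ h) (hn : 1 ≤ n) (s : Fin n → ℕ)
    (u : R) (hu : u ∈ symbolicPower I M)
    (v : AlgebraicClosure (FractionRing R))
    (hv : v ^ M = algebraMap R (AlgebraicClosure (FractionRing R)) u)
    (L : IntermediateField (FractionRing R) (AlgebraicClosure (FractionRing R)))
    (hL : L = IntermediateField.adjoin (FractionRing R) {v})
    (v' : L) (hv' : (v' : AlgebraicClosure (FractionRing R)) = v)
    (R' : Subalgebra R L)
    (hR' : R' = (integralClosure (Algebra.adjoin R {v'}) L).restrictScalars R)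
    (w : R') (hw : (w : L) = v')
    (B : Type*) [CommRing B] [Algebra R' B] [Algebra R B] [IsScalarTower R R' B]
    (hloc : IsLocalRing R') (hB : IsBigCohenMacaulay R' hloc B)
    (hc : ∀ p, p ∈ associatedPrimes R (R ⧸ I) → ∃ c : R, c ∉ p ∧
      ∀ i : Fin n, algebraMap R B c * algebraMap R' B w ^ (s i + h) ∈
        Ideal.map (algebraMap R B) (I ^ (s i + 1))) :
    ∀ i : Fin n, algebraMap R' B w ^ (s i + h) ∈
      Ideal.map (algebraMap R B) (symbolicPower I (s i + 1)) := by
  have : IsScalarTower R L (AlgebraicClosure (FractionRing R)) :=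
    .to₁₃₄ R (FractionRing R) L (AlgebraicClosure (FractionRing R))
  have hv'_int : IsIntegral R v' := by
    have hv_int : IsIntegral R v := .of_pow hM (hv ▸ isIntegral_algebraMap)
    rw [← hv'] at hv_int
    exact (isIntegral_algebraMap_iff (algebraMap L _).injective).mp hv_int
  have : Algebra.IsIntegral R R' := hR' ▸ isIntegral_integralClosure_adjoin_singleton hv'_int
  have : FaithfulSMul R L := .trans R (FractionRing R) L
  have : FaithfulSMul R R' := .tower_bot R R' L
  exact fun i ↦ stmt10_general hreg hloc hB I _ _ fun p hp ↦ (hc p hp).imp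
    fun c hcp ↦ ⟨hcp.1, hcp.2 i⟩
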